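/- arXiv:math/0102212 — 5 statements merged into one kernel-verified Lean document; each statement's English description precedes it below -/
import Mathlib

section
/- If a Banach space X has property upper (H₂), then X has property upper (H). Likewise, if X has property lower (H₂), then X has property lower (H). -/
/-!
Upper case: choose `F` for `δ = 3/4`. The sum over `F` has norm at most `C √n`, while the vectors
off `F` form a normalized unconditional sequence with the same constant and of length at most
`n / 4` (`NormalizedUncond.comp_injective`). By induction on the length, with bound `2C √n`, the
total is at most `C √n + 2C √(n / 4) = 2C √n`; equivalently, one sums a geometric series.

Lower case: choose `F` for `δ = 1/4`. The sum over `F` has norm at least `√(n / 4) / C`, and by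
unconditionality it is at most `(1 + λ) / 2` times the norm of the whole sum
(`NormalizedUncond.two_mul_norm_sum_le`).
-/

open scoped BigOperators

/-- `(x i)` is a normalized `lam`-unconditional (finite) basic sequence in `X`. -/
def NormalizedUncond {X : Type*} [NormedAddCommGroup X] [NormedSpace ℝ X]
    (lam : ℝ) {n : ℕ} (x : Fin n → X) : Prop :=
  (∀ i, ‖x i‖ = 1) ∧
  ∀ (ε a : Fin n → ℝ), (∀ i, ε i = 1 ∨ ε i = -1) →
    ‖∑ i, (ε i * a i) • x i‖ ≤ lam * ‖∑ i, a i • x i‖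

/-- property upper (H) -/
def UpperH (X : Type*) [NormedAddCommGroup X] [NormedSpace ℝ X] : Prop :=
  ∃ f : ℝ → ℝ, ∀ (lam : ℝ) (n : ℕ) (x : Fin n → X), NormalizedUncond lam x →
    ‖∑ i, x i‖ ≤ f lam * Real.sqrt n

/-- property lower (H) -/
def LowerH (X : Type*) [NormedAddCommGroup X] [NormedSpace ℝ X] : Prop :=
  ∃ f : ℝ → ℝ, (∀ lam, 0 < f lam) ∧
    ∀ (lam : ℝ) (n : ℕ) (x : Fin n → X), NormalizedUncond lam x →
      Real.sqrt n / f lam ≤ ‖∑ i, x i‖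

/-- property upper (H₂) -/
def UpperH2 (X : Type*) [NormedAddCommGroup X] [NormedSpace ℝ X] : Prop :=
  ∃ C : ℝ → ℝ → ℝ, ∀ (δ : ℝ), 0 < δ → δ < 1 →
    ∀ (lam : ℝ) (n : ℕ) (x : Fin n → X), NormalizedUncond lam x →
      ∃ F : Finset (Fin n), δ * n ≤ F.card ∧
        ∀ a : Fin n → ℝ, ‖∑ i ∈ F, a i • x i‖ ≤ C lam δ * Real.sqrt (∑ i ∈ F, a i ^ 2)

/-- property lower (H₂) -/
def LowerH2 (X : Type*) [NormedAddCommGroup X] [NormedSpace ℝ X] : Prop :=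
  ∃ C : ℝ → ℝ → ℝ, (∀ lam δ, 0 < C lam δ) ∧
    ∀ (δ : ℝ), 0 < δ → δ < 1 →
      ∀ (lam : ℝ) (n : ℕ) (x : Fin n → X), NormalizedUncond lam x →
        ∃ F : Finset (Fin n), δ * n ≤ F.card ∧
          ∀ a : Fin n → ℝ, Real.sqrt (∑ i ∈ F, a i ^ 2) / C lam δ ≤ ‖∑ i ∈ F, a i • x i‖

/-- Extending coefficients by zero along an injection does not change the linear combination. -/
lemma sum_extend_smul {X : Type*} [NormedAddCommGroup X] [NormedSpace ℝ X] {m n : ℕ}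
    (x : Fin n → X) {e : Fin m → Fin n} (he : Function.Injective e) (b : Fin m → ℝ)
    (c : Fin n → ℝ) (hb : ∀ j, c (e j) = b j) (hc : ∀ i, (¬ ∃ j, e j = i) → c i = 0) :
    ∑ i, c i • x i = ∑ j, b j • x (e j) := by
  symm
  refine Finset.sum_of_injOn e he.injOn (by simp) ?_ ?_
  · intro i _ hi
    rw [hc i (by simpa using hi), zero_smul]
  · intro j _
    rw [hb]

lemma NormalizedUncond.comp_injective {X : Type*} [NormedAddCommGroup X] [NormedSpace ℝ X]
    {lam : ℝ} {m n : ℕ} {x : Fin n → X} (hx : NormalizedUncond lam x)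
    {e : Fin m → Fin n} (he : Function.Injective e) :
    NormalizedUncond lam (fun j => x (e j)) := by
  refine ⟨fun j => hx.1 _, fun ε a hε => ?_⟩
  -- Extend the coefficients by zero and the signs by `1` to all of `Fin n`.
  have key := hx.2 (Function.extend e ε 1) (Function.extend e a 0) (fun i => by
    by_cases h : ∃ j, e j = i
    · obtain ⟨j, rfl⟩ := h
      rw [he.extend_apply]
      exact hε j
    · left
      rw [Function.extend_apply' _ _ _ h, Pi.one_apply])
  rw [sum_extend_smul x he a _ (fun j => he.extend_apply _ _ j)
      (fun i hi => by rw [Function.extend_apply' _ _ _ hi, Pi.zero_apply]),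
    sum_extend_smul x he (fun j => ε j * a j) _
      (fun j => by rw [he.extend_apply, he.extend_apply])
      (fun i hi => by rw [Function.extend_apply' a _ _ hi, Pi.zero_apply, mul_zero])] at key
  exact key

/-- Restricting a sum to a subset costs a factor `(1 + λ) / 2`: average the sum with its copy whose
signs are flipped off `F`. -/
lemma NormalizedUncond.two_mul_norm_sum_le {X : Type*} [NormedAddCommGroup X] [NormedSpace ℝ X]
    {lam : ℝ} {n : ℕ} {x : Fin n → X} (hx : NormalizedUncond lam x) (F : Finset (Fin n)) :
    2 * ‖∑ i ∈ F, x i‖ ≤ (1 + lam) * ‖∑ i, x i‖ := by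
  have h := hx.2 (fun i => if i ∈ F then 1 else -1) (fun _ => 1) (fun i => by
    by_cases hi : i ∈ F <;> simp [hi])
  simp only [mul_one, one_smul] at h
  have h2 : (2 : ℝ) • ∑ i ∈ F, x i
      = ∑ i, x i + ∑ i, (if i ∈ F then (1 : ℝ) else -1) • x i := by
    rw [← Finset.sum_add_distrib, Finset.smul_sum]
    refine Finset.sum_subset_zero_on_sdiff (Finset.subset_univ F) (fun i hi => ?_)
      (fun i hi => ?_)
    · rw [if_neg (Finset.mem_sdiff.1 hi).2, neg_one_smul, add_neg_cancel]
    · rw [if_pos hi, one_smul, two_smul]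
  have h3 : 2 * ‖∑ i ∈ F, x i‖ = ‖(2 : ℝ) • ∑ i ∈ F, x i‖ := by
    rw [norm_smul]; norm_num
  rw [h3, h2]
  refine (norm_add_le _ _).trans ?_
  linarith

lemma sqrt_div_four (t : ℝ) : Real.sqrt (t / 4) = Real.sqrt t / 2 := by
  rw [Real.sqrt_div' t (by norm_num), show (4 : ℝ) = 2 ^ 2 by norm_num,
    Real.sqrt_sq (by norm_num)]

lemma UpperH2.upperH {X : Type*} [NormedAddCommGroup X] [NormedSpace ℝ X] (h : UpperH2 X) :
    UpperH X := by
  obtain ⟨C, hC⟩ := h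
  refine ⟨fun lam => 2 * |C lam (3 / 4)|, fun lam n => ?_⟩
  induction n using Nat.strong_induction_on with
  | _ n ih =>
    intro x hx
    rcases Nat.eq_zero_or_pos n with rfl | hn
    · simp
    obtain ⟨F, hF, hb⟩ := hC (3 / 4) (by norm_num) (by norm_num) lam n x hx
    have hn' : (0 : ℝ) < n := by exact_mod_cast hn
    have hcard : F.card + Fᶜ.card = n := by
      simp
    have hcard' : (F.card : ℝ) + (Fᶜ.card : ℝ) = n := by exact_mod_cast hcard
    have hlt : Fᶜ.card < n := by
      have : (Fᶜ.card : ℝ) < n := by linarith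
      exact_mod_cast this
    have hrest := ih _ hlt _ (hx.comp_injective (Fᶜ.orderEmbOfFin rfl).injective)
    have hsum : ∑ j, x (Fᶜ.orderEmbOfFin rfl j) = ∑ i ∈ Fᶜ, x i := by
      conv_rhs => rw [← Finset.map_orderEmbOfFin_univ Fᶜ rfl, Finset.sum_map]
      rfl
    rw [hsum] at hrest
    have hF1 := hb (fun _ => 1)
    simp only [one_smul, one_pow, Finset.sum_const, nsmul_eq_mul, mul_one] at hF1
    have s1 : Real.sqrt F.card ≤ Real.sqrt n := Real.sqrt_le_sqrt (by
      have : (0 : ℝ) ≤ Fᶜ.card := Nat.cast_nonneg _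
      linarith)
    have s2 : Real.sqrt Fᶜ.card ≤ Real.sqrt n / 2 := by
      rw [← sqrt_div_four]
      exact Real.sqrt_le_sqrt (by linarith)
    calc ‖∑ i, x i‖ = ‖∑ i ∈ F, x i + ∑ i ∈ Fᶜ, x i‖ := by rw [Finset.sum_add_sum_compl]
      _ ≤ ‖∑ i ∈ F, x i‖ + ‖∑ i ∈ Fᶜ, x i‖ := norm_add_le _ _
      _ ≤ |C lam (3 / 4)| * Real.sqrt n + 2 * |C lam (3 / 4)| * (Real.sqrt n / 2) := by
        refine add_le_add (hF1.trans ?_) (hrest.trans (by gcongr))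
        exact mul_le_mul (le_abs_self _) s1 (Real.sqrt_nonneg _) (abs_nonneg _)
      _ = 2 * |C lam (3 / 4)| * Real.sqrt n := by ring

lemma LowerH2.lowerH {X : Type*} [NormedAddCommGroup X] [NormedSpace ℝ X] (h : LowerH2 X) :
    LowerH X := by
  obtain ⟨C, hpos, hC⟩ := h
  -- The absolute value only serves to keep the function positive at meaningless `lam`.
  refine ⟨fun lam => C lam (1 / 4) * (1 + |lam|),
    fun lam => mul_pos (hpos _ _) (by positivity), fun lam n x hx => ?_⟩
  obtain ⟨F, hF, hb⟩ := hC (1 / 4) (by norm_num) (by norm_num) lam n x hx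
  have hF1 := hb (fun _ => 1)
  simp only [one_smul, one_pow, Finset.sum_const, nsmul_eq_mul, mul_one] at hF1
  have hc := hpos lam (1 / 4)
  have s : Real.sqrt n / 2 ≤ Real.sqrt F.card := by
    rw [← sqrt_div_four]
    exact Real.sqrt_le_sqrt (by linarith)
  have h2 := hx.two_mul_norm_sum_le F
  have h3 : (1 + lam) * ‖∑ i, x i‖ ≤ (1 + |lam|) * ‖∑ i, x i‖ := by
    gcongr
    exact le_abs_self _
  rw [div_le_iff₀ hc] at hF1
  rw [div_le_iff₀ (mul_pos hc (by positivity))]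
  have h4 := mul_le_mul_of_nonneg_left (h2.trans h3) hc.le
  linarith

theorem statement0 (X : Type*) [NormedAddCommGroup X] [NormedSpace ℝ X] [CompleteSpace X] :
    (UpperH2 X → UpperH X) ∧ (LowerH2 X → LowerH X) :=
  ⟨UpperH2.upperH, LowerH2.lowerH⟩
end

section
/- For a Banach space X the following are equivalent: (1) X has property upper (H₂); (2) there exists a single δ ∈ (0,1) and a function C(·) such that for every normalized λ-unconditional basic sequence (x_i)_{i=1}^n in X there is a subset F ⊆ {1,…,n} with |F| ≥ δn and ‖Σ_{i∈F} a_i x_i‖ ≤ C(λ)(Σ_{i∈F} a_i²)^{1/2} for all scalars. The analogous equivalence holds for property lower (H₂) (with the lower ℓ₂-estimate ‖Σ_{i∈F} a_i x_i‖ ≥ C(λ)^{-1}(Σ_{i∈F} a_i²)^{1/2}). -/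
/-!
The nontrivial direction is an exhaustion argument. A subsequence of a normalized
`lam`-unconditional sequence is again one, so the hypothesis for the single `δ` applies inside
whatever part of the index set has not been covered so far, and each application leaves at most
the fraction `1 - δ` of that part uncovered. After `k` rounds the union `S` of the extracted sets
misses at most `(1 - δ) ^ k * n` indices, where `k` depends only on `δ` and the target proportion
(`exhaustion`).

An upper `ℓ₂`-estimate on the union costs a factor `k` by the triangle inequality. For the lower
estimate, `ℓ₂`-norms are subadditive over disjoint sets, and unconditionality bounds each coordinate
projection by `1 + |lam|` (`NormalizedUncond.norm_sum_subset_le`), which costs the factor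
`k * (1 + |lam|)`.
-/

open scoped BigOperators

lemma NormalizedUncond.comp {X : Type*} [NormedAddCommGroup X] [NormedSpace ℝ X]
    {lam : ℝ} {n m : ℕ} {x : Fin n → X} (h : NormalizedUncond lam x) (e : Fin m ↪ Fin n) :
    NormalizedUncond lam (fun i => x (e i)) := by
  refine ⟨fun i => h.1 _, fun ε a hε => ?_⟩
  have key := h.2 (Function.extend e ε 1) (Function.extend e a 0) (fun j => by
    by_cases hj : ∃ i, e i = j
    · obtain ⟨i, rfl⟩ := hj
      rw [e.injective.extend_apply]
      exact hε i
    · rw [Function.extend_apply' _ _ _ hj]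
      exact Or.inl rfl)
  have h1 : ∑ i, (ε i * a i) • x (e i) =
      ∑ j, (Function.extend e ε 1 j * Function.extend e a 0 j) • x j := by
    refine Finset.sum_of_injOn e e.injective.injOn (fun _ _ => by simp) ?_ ?_
    · intro j _ hj
      rw [Function.extend_apply' (f := e) a 0 j (by simpa using hj)]
      simp
    · intro i _
      rw [e.injective.extend_apply, e.injective.extend_apply]
  have h2 : ∑ i, a i • x (e i) = ∑ j, Function.extend e a 0 j • x j := by
    refine Finset.sum_of_injOn e e.injective.injOn (fun _ _ => by simp) ?_ ?_
    · intro j _ hj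
      rw [Function.extend_apply' (f := e) a 0 j (by simpa using hj)]
      simp
    · intro i _
      rw [e.injective.extend_apply]
  rw [h1, h2]
  exact key

/-- Coordinate projections have norm at most `1 + |lam|`: twice the projection onto `F` is the
identity plus the sign change that is `1` on `F` and `-1` off `F`. -/
lemma NormalizedUncond.norm_sum_subset_le {X : Type*} [NormedAddCommGroup X] [NormedSpace ℝ X]
    {lam : ℝ} {n : ℕ} {x : Fin n → X} (h : NormalizedUncond lam x) (F : Finset (Fin n))
    (a : Fin n → ℝ) :
    ‖∑ i ∈ F, a i • x i‖ ≤ (1 + |lam|) * ‖∑ i, a i • x i‖ := by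
  have key := h.2 (fun i => if i ∈ F then 1 else -1) a (fun i => by
    by_cases hi : i ∈ F <;> simp [hi])
  have h1 : (2 : ℝ) • ∑ i ∈ F, a i • x i =
      ∑ i, a i • x i + ∑ i, ((if i ∈ F then (1 : ℝ) else -1) * a i) • x i := by
    rw [← Finset.sum_add_distrib, Finset.smul_sum, ← Finset.sum_subset (Finset.subset_univ F)]
    · refine Finset.sum_congr rfl fun i hi => ?_
      simp only [hi, if_true, one_mul, two_smul]
    · intro i _ hi
      simp [hi]
  have h2 : 2 * ‖∑ i ∈ F, a i • x i‖ ≤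
      ‖∑ i, a i • x i‖ + lam * ‖∑ i, a i • x i‖ := by
    calc 2 * ‖∑ i ∈ F, a i • x i‖ = ‖(2 : ℝ) • ∑ i ∈ F, a i • x i‖ := by
          rw [norm_smul]; norm_num
      _ ≤ _ := by rw [h1]; exact (norm_add_le _ _).trans (by gcongr)
  have h3 := mul_le_mul_of_nonneg_right (le_abs_self lam) (norm_nonneg (∑ i, a i • x i))
  have h4 := norm_nonneg (∑ i ∈ F, a i • x i)
  nlinarith

/-- Suppose every set `R` of indices contains a `P`-set of proportion at least `δ`, and `Q k` holds
for disjoint unions of `k` sets with `P`. Then `k` rounds of extraction produce a set satisfying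
`Q k` which misses at most `(1 - δ) ^ k * n` indices. -/
lemma exhaustion {n : ℕ} {δ : ℝ} (hδ : δ < 1) {P : Finset (Fin n) → Prop}
    {Q : ℕ → Finset (Fin n) → Prop}
    (hP : ∀ R : Finset (Fin n), ∃ F ⊆ R, δ * R.card ≤ F.card ∧ P F)
    (h0 : Q 0 ∅) (hQ : ∀ k S F, Disjoint S F → Q k S → P F → Q (k + 1) (S ∪ F)) (k : ℕ) :
    ∃ S, (n : ℝ) - S.card ≤ (1 - δ) ^ k * n ∧ Q k S := by
  induction k with
  | zero => exact ⟨∅, by simp, h0⟩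
  | succ k ih =>
    obtain ⟨S, hS, hQS⟩ := ih
    obtain ⟨F, hF, hc, hPF⟩ := hP Sᶜ
    have hd : Disjoint S F := disjoint_compl_right.mono_right hF
    refine ⟨S ∪ F, ?_, hQ k S F hd hQS hPF⟩
    have hcc : ((Sᶜ).card : ℝ) = n - S.card := by
      rw [Finset.card_compl, Fintype.card_fin, Nat.cast_sub (by simpa using S.card_le_univ)]
    rw [hcc] at hc
    rw [Finset.card_union_of_disjoint hd, pow_succ]
    push_cast
    nlinarith [mul_le_mul_of_nonneg_left hS (sub_nonneg.2 hδ.le)]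

/-- The hypothesis for a single `δ`, stated for a property `P` of finite families, yields `P` for
a large subset of any given index set `R`. -/
lemma exists_subset_of_comp {n : ℕ} {δ : ℝ} {P : Finset (Fin n) → Prop}
    (h : ∀ (m : ℕ) (e : Fin m ↪ Fin n),
      ∃ F : Finset (Fin m), δ * m ≤ F.card ∧ P (F.map e)) (R : Finset (Fin n)) :
    ∃ F ⊆ R, δ * R.card ≤ F.card ∧ P F := by
  obtain ⟨F, hc, hP⟩ := h R.card (R.orderEmbOfFin rfl).toEmbedding
  refine ⟨_, ?_, by simpa using hc, hP⟩
  intro i hi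
  obtain ⟨j, _, rfl⟩ := Finset.mem_map.1 hi
  exact R.orderEmbOfFin_mem rfl j

lemma exists_rounds {δ : ℝ} (h0 : 0 < δ) (η : ℝ) :
    ∃ k : ℕ, η < 1 → (1 - δ) ^ k ≤ 1 - η := by
  by_cases hη : η < 1
  · obtain ⟨k, hk⟩ := exists_pow_lt_of_lt_one (sub_pos.2 hη) (sub_lt_self 1 h0)
    exact ⟨k, fun _ => hk.le⟩
  · exact ⟨0, fun h => absurd h hη⟩

theorem statement1 (X : Type*) [NormedAddCommGroup X] [NormedSpace ℝ X] [CompleteSpace X] :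
    (UpperH2 X ↔
      ∃ δ : ℝ, 0 < δ ∧ δ < 1 ∧ ∃ C : ℝ → ℝ,
        ∀ (lam : ℝ) (n : ℕ) (x : Fin n → X), NormalizedUncond lam x →
          ∃ F : Finset (Fin n), δ * n ≤ F.card ∧
            ∀ a : Fin n → ℝ, ‖∑ i ∈ F, a i • x i‖ ≤ C lam * Real.sqrt (∑ i ∈ F, a i ^ 2)) ∧
    (LowerH2 X ↔
      ∃ δ : ℝ, 0 < δ ∧ δ < 1 ∧ ∃ C : ℝ → ℝ, (∀ lam, 0 < C lam) ∧
        ∀ (lam : ℝ) (n : ℕ) (x : Fin n → X), NormalizedUncond lam x →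
          ∃ F : Finset (Fin n), δ * n ≤ F.card ∧
            ∀ a : Fin n → ℝ, Real.sqrt (∑ i ∈ F, a i ^ 2) / C lam ≤ ‖∑ i ∈ F, a i • x i‖) := by
  refine ⟨⟨?_, ?_⟩, ⟨?_, ?_⟩⟩
  · rintro ⟨C, hC⟩
    exact ⟨1 / 2, by norm_num, by norm_num, fun lam => C lam (1 / 2),
      hC (1 / 2) (by norm_num) (by norm_num)⟩
  · rintro ⟨δ, hδ0, hδ1, C, hC⟩
    choose k hk using exists_rounds hδ0
    refine ⟨fun lam η => k η * |C lam|, fun η _ hη1 lam n x hx => ?_⟩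
    obtain ⟨S, hS, hQ⟩ := exhaustion (n := n) hδ1
      (P := fun F => ∀ a : Fin n → ℝ,
        ‖∑ i ∈ F, a i • x i‖ ≤ C lam * Real.sqrt (∑ i ∈ F, a i ^ 2))
      (Q := fun k S => ∀ a : Fin n → ℝ,
        ‖∑ i ∈ S, a i • x i‖ ≤ k * |C lam| * Real.sqrt (∑ i ∈ S, a i ^ 2))
      (exists_subset_of_comp fun m e => by
        obtain ⟨F, hc, hF⟩ := hC lam m _ (hx.comp e)
        refine ⟨F, hc, fun a => ?_⟩
        simpa only [Finset.sum_map] using hF fun i => a (e i))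
      (fun a => by simp)
      (fun k S F hd hS hF a => by
        rw [Finset.sum_union hd, Finset.sum_union hd]
        have hs : 0 ≤ ∑ i ∈ S, a i ^ 2 := Finset.sum_nonneg fun i _ => sq_nonneg _
        have hf : 0 ≤ ∑ i ∈ F, a i ^ 2 := Finset.sum_nonneg fun i _ => sq_nonneg _
        calc ‖∑ i ∈ S, a i • x i + ∑ i ∈ F, a i • x i‖
            ≤ k * |C lam| * Real.sqrt (∑ i ∈ S, a i ^ 2)
              + C lam * Real.sqrt (∑ i ∈ F, a i ^ 2) :=
              (norm_add_le _ _).trans (add_le_add (hS a) (hF a))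
          _ ≤ k * |C lam| * Real.sqrt (∑ i ∈ S, a i ^ 2 + ∑ i ∈ F, a i ^ 2)
              + |C lam| * Real.sqrt (∑ i ∈ S, a i ^ 2 + ∑ i ∈ F, a i ^ 2) := by
              gcongr
              · linarith
              · exact le_abs_self _
              · linarith
          _ = _ := by push_cast; ring)
      (k η)
    refine ⟨S, ?_, hQ⟩
    nlinarith [mul_le_mul_of_nonneg_right (hk η hη1) (Nat.cast_nonneg (α := ℝ) n)]
  · rintro ⟨C, hC0, hC⟩
    exact ⟨1 / 2, by norm_num, by norm_num, fun lam => C lam (1 / 2), fun lam => hC0 _ _,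
      hC (1 / 2) (by norm_num) (by norm_num)⟩
  · rintro ⟨δ, hδ0, hδ1, C, hC0, hC⟩
    choose k hk using exists_rounds hδ0
    -- `k η + 1` instead of `k η` keeps the constant positive when no rounds are needed.
    have hpos : ∀ lam η, 0 < ((k η : ℝ) + 1) * (C lam * (1 + |lam|)) := fun lam η => by
      have := hC0 lam
      positivity
    refine ⟨fun lam η => (k η + 1) * (C lam * (1 + |lam|)), hpos, fun η _ hη1 lam n x hx => ?_⟩
    -- `Q` compares with the full sum, so that the projection constants do not compound over the
    -- rounds.
    obtain ⟨S, hS, hQ⟩ := exhaustion (n := n) hδ1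
      (P := fun F => ∀ a : Fin n → ℝ,
        Real.sqrt (∑ i ∈ F, a i ^ 2) / C lam ≤ ‖∑ i ∈ F, a i • x i‖)
      (Q := fun k S => ∀ a : Fin n → ℝ,
        Real.sqrt (∑ i ∈ S, a i ^ 2) ≤ k * (C lam * (1 + |lam|)) * ‖∑ i, a i • x i‖)
      (exists_subset_of_comp fun m e => by
        obtain ⟨F, hc, hF⟩ := hC lam m _ (hx.comp e)
        refine ⟨F, hc, fun a => ?_⟩
        simpa only [Finset.sum_map] using hF fun i => a (e i))
      (fun a => by simp)
      (fun k S F hd hS hF a => by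
        rw [Finset.sum_union hd]
        have h1 := (div_le_iff₀' (hC0 lam)).1 (hF a)
        have h2 := mul_le_mul_of_nonneg_left (hx.norm_sum_subset_le F a) (hC0 lam).le
        calc Real.sqrt (∑ i ∈ S, a i ^ 2 + ∑ i ∈ F, a i ^ 2)
            ≤ Real.sqrt (∑ i ∈ S, a i ^ 2) + Real.sqrt (∑ i ∈ F, a i ^ 2) := by
              have hs : 0 ≤ ∑ i ∈ S, a i ^ 2 := Finset.sum_nonneg fun i _ => sq_nonneg _
              have hf : 0 ≤ ∑ i ∈ F, a i ^ 2 := Finset.sum_nonneg fun i _ => sq_nonneg _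
              refine Real.sqrt_le_iff.2 ⟨by positivity, ?_⟩
              rw [add_sq, Real.sq_sqrt hs, Real.sq_sqrt hf]
              have : 0 ≤ Real.sqrt (∑ i ∈ S, a i ^ 2) * Real.sqrt (∑ i ∈ F, a i ^ 2) := by
                positivity
              linarith
          _ ≤ k * (C lam * (1 + |lam|)) * ‖∑ i, a i • x i‖
              + C lam * ((1 + |lam|) * ‖∑ i, a i • x i‖) :=
              add_le_add (hS a) (h1.trans h2)
          _ = _ := by push_cast; ring)
      (k η)
    refine ⟨S, ?_, fun a => ?_⟩
    · nlinarith [mul_le_mul_of_nonneg_right (hk η hη1) (Nat.cast_nonneg (α := ℝ) n)]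
    · rw [div_le_iff₀' (hpos lam η)]
      have h1 := hQ fun i => if i ∈ S then a i else 0
      have e1 : ∑ i ∈ S, (if i ∈ S then a i else 0) ^ 2 = ∑ i ∈ S, a i ^ 2 :=
        Finset.sum_congr rfl fun i hi => by simp [hi]
      have e2 : ∑ i, (if i ∈ S then a i else 0) • x i = ∑ i ∈ S, a i • x i := by
        simp [ite_smul, Finset.sum_ite_mem]
      rw [e1, e2] at h1
      have := hC0 lam
      refine h1.trans ?_
      gcongr
      linarith
end

section
/- Let X be a Banach sequence space which is p-convex with constant M (1 < p < ∞) and suppose max_{0≤j<k} ‖L_k^j‖ ≤ C k^a for all k ∈ ℕ. Then for any disjointly supported x₁,…,x_k ∈ c₀₀ one has ‖x₁+⋯+x_k‖_{X_inf} ≤ M C k^a (Σ_{j=1}^k ‖x_j‖_{X_inf}^p)^{1/p}. -/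
/-!
Interleave near-optimal rearrangements. For permutations `σ j`, put `y j = x j ∘ σ j` and let `z` be
the sequence `z (k * n + j) = y j n`, that is, the sum of the disjointly supported sequences
`Lmap k j (y j)`. Since the sequences `x j` are disjointly and finitely supported, `z` and
`∑ j, x j` have the same nonzero entries with the same multiplicities, and both vanish at infinitely
many places, so they are rearrangements of one another (`exists_perm_interleave`). Disjointness
gives `|z| = (∑ j |Lmap k j (y j)| ^ p) ^ (1 / p)`, and `p`-convexity followed by the bound on the
maps `Lmap k j` yields the estimate with `XN (x j ∘ σ j)` on the right (`XinfN_sum_le`). Taking each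
`XN (x j ∘ σ j)` within `ε` of its infimum and letting `ε → 0` finishes the proof.
-/


open scoped ENNReal BigOperators

noncomputable section

/-- The operator `L_k^j`, determined by `L_k^j (e_n) = e_{k n + j}`. -/
def Lmap (k j : ℕ) (x : ℕ → ℝ) : ℕ → ℝ :=
  fun m => if m % k = j then x (m / k) else 0

/-- The quasi-norm `‖ξ‖_{X_inf} = inf_{σ ∈ Π} ‖S_σ ξ‖_X`. -/
def XinfN (XN : (ℕ → ℝ) → ℝ≥0∞) (x : ℕ → ℝ) : ℝ≥0∞ :=
  ⨅ σ : Equiv.Perm ℕ, XN fun n => x (σ n)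

/-- `XN` is (the extended norm of) a Banach sequence space: a lattice norm on
real sequences, ordered coordinatewise, containing the unit vectors. -/
def IsBanachSeqSpace (XN : (ℕ → ℝ) → ℝ≥0∞) : Prop :=
  (∀ x y, XN (x + y) ≤ XN x + XN y) ∧
  (∀ (c : ℝ) (x), XN (c • x) = ENNReal.ofReal |c| * XN x) ∧
  (∀ x, XN x = 0 → x = 0) ∧
  (∀ x y, (∀ n, |x n| ≤ |y n|) → XN x ≤ XN y) ∧
  (∀ n : ℕ, XN (fun m => if m = n then 1 else 0) < ⊤)

/-- `X` is `p`-convex with constant `M`. -/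
def PConvex (XN : (ℕ → ℝ) → ℝ≥0∞) (p M : ℝ) : Prop :=
  ∀ (k : ℕ) (x : Fin k → ℕ → ℝ),
    XN (fun n => (∑ j, |x j n| ^ p) ^ (1 / p)) ≤
      ENNReal.ofReal M * (∑ j, XN (x j) ^ p) ^ (1 / p)

/-- `X` is `q`-concave with constant `M`. -/
def QConcave (XN : (ℕ → ℝ) → ℝ≥0∞) (q M : ℝ) : Prop :=
  ∀ (k : ℕ) (x : Fin k → ℕ → ℝ),
    (∑ j, XN (x j) ^ q) ^ (1 / q) ≤
      ENNReal.ofReal M * XN (fun n => (∑ j, |x j n| ^ q) ^ (1 / q))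

/-- `max_{0 ≤ j < k} ‖L_k^j‖ ≤ C k^a`. -/
def LBound (XN : (ℕ → ℝ) → ℝ≥0∞) (C a : ℝ) : Prop :=
  ∀ k j : ℕ, j < k → ∀ x : ℕ → ℝ,
    XN (Lmap k j x) ≤ ENNReal.ofReal (C * (k : ℝ) ^ a) * XN x

/-- disjointly supported family -/
def DisjSupp {k : ℕ} (x : Fin k → ℕ → ℝ) : Prop :=
  ∀ i j, i ≠ j → ∀ n, x i n = 0 ∨ x j n = 0

/-- membership in `c₀₀` -/
def FinSupp (x : ℕ → ℝ) : Prop := (Function.support x).Finite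

/-- An injection defined on a finite set of naturals extends to a permutation: both complements are
countably infinite. -/
lemma exists_perm_extend (T : Set ℕ) (hT : T.Finite) (f : ℕ → ℕ) (hf : Set.InjOn f T) :
    ∃ τ : Equiv.Perm ℕ, ∀ m ∈ T, τ m = f m := by
  classical
  have h1 : Infinite (Tᶜ : Set ℕ) := hT.infinite_compl.to_subtype
  have h2 : Infinite ((f '' T)ᶜ : Set ℕ) := (hT.image f).infinite_compl.to_subtype
  obtain ⟨e⟩ := nonempty_equiv_of_countable (α := (Tᶜ : Set ℕ)) (β := ((f '' T)ᶜ : Set ℕ))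
  refine ⟨(Equiv.Set.sumCompl T).symm.trans
    ((Equiv.sumCongr (Equiv.Set.imageOfInjOn f T hf) e).trans (Equiv.Set.sumCompl (f '' T))), ?_⟩
  intro m hm
  simp [Equiv.Set.sumCompl_symm_apply_of_mem hm, Equiv.Set.imageOfInjOn]

/-- The sum of a disjointly and finitely supported family is, up to a permutation, dominated by the
interleaving `m ↦ x_{m % k} (σ_{m % k} (m / k))`. -/
lemma exists_perm_interleave {k : ℕ} (hk : 0 < k) (x : Fin k → ℕ → ℝ)
    (hfin : ∀ j, FinSupp (x j)) (hd : DisjSupp x) (σ : Fin k → Equiv.Perm ℕ) :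
    ∃ τ : Equiv.Perm ℕ, ∀ m, |(∑ j, x j) (τ m)| ≤
      |x ⟨m % k, Nat.mod_lt m hk⟩ (σ ⟨m % k, Nat.mod_lt m hk⟩ (m / k))| := by
  set r : ℕ → Fin k := fun m => ⟨m % k, Nat.mod_lt m hk⟩ with hr
  set f : ℕ → ℕ := fun m => σ (r m) (m / k) with hf
  set T : Set ℕ := {m | x (r m) (f m) ≠ 0} with hTdef
  have hinj : Set.InjOn f T := by
    intro m hm m' hm' h
    have hrr : r m = r m' := by
      by_contra hne
      rcases hd _ _ hne (f m) with h0 | h0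
      · exact hm h0
      · rw [h] at h0
        exact hm' h0
    have hdiv : m / k = m' / k := by
      have h' : σ (r m) (m / k) = σ (r m') (m' / k) := h
      rw [hrr] at h'
      exact (σ (r m')).injective h'
    have hmod : m % k = m' % k := congrArg Fin.val hrr
    rw [← Nat.div_add_mod m k, ← Nat.div_add_mod m' k, hdiv, hmod]
  have hval : ∀ j s, x j s ≠ 0 → (∑ i, x i) s = x j s := by
    intro j s hs
    rw [Finset.sum_apply]
    refine Finset.sum_eq_single j (fun i _ hij => ?_) (by simp)
    exact (hd i j hij s).resolve_right hs
  have hT : T.Finite := by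
    refine Set.Finite.of_injOn (t := ⋃ j, Function.support (x j)) (f := f) ?_ hinj
      (Set.finite_iUnion hfin)
    intro m hm
    exact Set.mem_iUnion.2 ⟨r m, hm⟩
  obtain ⟨τ, hτ⟩ := exists_perm_extend T hT f hinj
  refine ⟨τ, fun m => ?_⟩
  change _ ≤ |x (r m) (f m)|
  by_cases hm : m ∈ T
  · rw [hτ m hm, hval (r m) (f m) hm]
  · suffices h0 : (∑ j, x j) (τ m) = 0 by
      rw [h0, abs_zero]
      exact abs_nonneg _
    by_contra h
    rw [Finset.sum_apply] at h
    obtain ⟨j, -, hj⟩ := Finset.exists_ne_zero_of_sum_ne_zero h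
    -- A nonzero entry of the sum at `τ m` is the entry of the interleaving at
    -- `m' = k * n + j ∈ T`, where `σ j n = τ m`; so `τ m = τ m'` although `m ∉ T`.
    set m' := k * (σ j).symm (τ m) + (j : ℕ) with hm'
    have hrm : r m' = j := by
      apply Fin.ext
      simp [hr, hm', Nat.mod_eq_of_lt j.2]
    have hdm : m' / k = (σ j).symm (τ m) := by
      rw [hm', Nat.mul_add_div hk, Nat.div_eq_of_lt j.2, add_zero]
    have hfm : f m' = τ m := by
      simp only [hf, hrm, hdm, Equiv.apply_symm_apply]
    have hmT : m' ∈ T := by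
      change x (r m') (f m') ≠ 0
      rw [hrm, hfm]
      exact hj
    have : m = m' := τ.injective (by rw [hτ m' hmT, hfm])
    exact hm (this ▸ hmT)

/-- The estimate for an arbitrary choice of rearrangements of the summands. -/
lemma XinfN_sum_le (XN : (ℕ → ℝ) → ℝ≥0∞) (p M C a : ℝ)
    (hp : 1 < p) (hM : 0 < M) (hX : IsBanachSeqSpace XN) (hconv : PConvex XN p M)
    (hL : LBound XN C a) {k : ℕ} (hk : 0 < k) (x : Fin k → ℕ → ℝ)
    (hfin : ∀ j, FinSupp (x j)) (hd : DisjSupp x) (σ : Fin k → Equiv.Perm ℕ) :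
    XinfN XN (∑ j, x j) ≤ ENNReal.ofReal (M * C * (k : ℝ) ^ a) *
      (∑ j, XN (fun n => x j (σ j n)) ^ p) ^ (1 / p) := by
  have hp0 : 0 < p := by linarith
  obtain ⟨τ, hτ⟩ := exists_perm_interleave hk x hfin hd σ
  set y : Fin k → ℕ → ℝ := fun j => Lmap k j (fun n => x j (σ j n)) with hy
  have hmono : XN (fun n => (∑ j, x j) (τ n)) ≤
      XN (fun n => (∑ j, |y j n| ^ p) ^ (1 / p)) := by
    refine hX.2.2.2.1 _ _ fun m => (hτ m).trans ?_
    have hsum : ∑ j, |y j m| ^ p =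
        |x ⟨m % k, Nat.mod_lt m hk⟩ (σ ⟨m % k, Nat.mod_lt m hk⟩ (m / k))| ^ p := by
      rw [Finset.sum_eq_single (⟨m % k, Nat.mod_lt m hk⟩ : Fin k)]
      · simp [hy, Lmap]
      · intro j _ hj
        have : m % k ≠ (j : ℕ) := fun h => hj (Fin.ext h.symm)
        simp [hy, Lmap, this, Real.zero_rpow hp0.ne']
      · simp
    rw [hsum, one_div, Real.rpow_rpow_inv (abs_nonneg _) hp0.ne', abs_abs]
  set B := ENNReal.ofReal (C * (k : ℝ) ^ a) with hB
  calc XinfN XN (∑ j, x j) ≤ XN (fun n => (∑ j, x j) (τ n)) := iInf_le _ τ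
    _ ≤ ENNReal.ofReal M * (∑ j, XN (y j) ^ p) ^ (1 / p) := hmono.trans (hconv k y)
    _ ≤ ENNReal.ofReal M * (∑ j, (B * XN (fun n => x j (σ j n))) ^ p) ^ (1 / p) := by
        gcongr with j
        exact hL k j j.2 _
    _ = ENNReal.ofReal (M * C * (k : ℝ) ^ a) *
          (∑ j, XN (fun n => x j (σ j n)) ^ p) ^ (1 / p) := by
        simp_rw [ENNReal.mul_rpow_of_nonneg _ _ hp0.le]
        rw [← Finset.mul_sum, ENNReal.mul_rpow_of_nonneg _ _ (by positivity), one_div,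
          ENNReal.rpow_rpow_inv hp0.ne', ← mul_assoc, hB, ← ENNReal.ofReal_mul hM.le, mul_assoc M]

theorem statement3 (XN : (ℕ → ℝ) → ℝ≥0∞) (p M C a : ℝ)
    (hp : 1 < p) (hM : 0 < M) (hC : 0 < C)
    (hX : IsBanachSeqSpace XN) (hconv : PConvex XN p M) (hL : LBound XN C a) :
    ∀ (k : ℕ) (x : Fin k → ℕ → ℝ), (∀ j, FinSupp (x j)) → DisjSupp x →
      XinfN XN (∑ j, x j) ≤
        ENNReal.ofReal (M * C * (k : ℝ) ^ a) * (∑ j, XinfN XN (x j) ^ p) ^ (1 / p) := by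
  intro k x hfin hd
  rcases Nat.eq_zero_or_pos k with rfl | hk
  · have h0 : XN 0 = 0 := by
      have := hX.2.1 0 0
      simpa using this
    refine (iInf_le _ (1 : Equiv.Perm ℕ)).trans ?_
    have h1 : (fun n => (∑ j, x j) ((1 : Equiv.Perm ℕ) n)) = 0 := by
      ext n
      simp
    rw [h1, h0]
    exact zero_le
  -- An additive error in `ℝ≥0∞` needs no case distinction when some infimum is `⊤`.
  have key : ∀ ε : ℝ≥0∞, 0 < ε → XinfN XN (∑ j, x j) ≤
      ENNReal.ofReal (M * C * (k : ℝ) ^ a) * (∑ j, (XinfN XN (x j) + ε) ^ p) ^ (1 / p) := by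
    intro ε hε
    have hex : ∀ j, ∃ σ : Equiv.Perm ℕ, XN (fun n => x j (σ n)) ≤ XinfN XN (x j) + ε := by
      intro j
      by_cases htop : XinfN XN (x j) = ⊤
      · exact ⟨1, by simp [htop]⟩
      · obtain ⟨σ, hσ⟩ := iInf_lt_iff.1 (ENNReal.lt_add_right htop hε.ne')
        exact ⟨σ, hσ.le⟩
    choose σ hσ using hex
    refine (XinfN_sum_le XN p M C a hp hM hX hconv hL hk x hfin hd σ).trans ?_
    have hp0 : 0 ≤ p := by linarith
    gcongr with j
    exact hσ j
  have hcont : Continuous fun ε : ℝ≥0∞ => ENNReal.ofReal (M * C * (k : ℝ) ^ a) *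
      (∑ j, (XinfN XN (x j) + ε) ^ p) ^ (1 / p) := by
    refine (ENNReal.continuous_const_mul ENNReal.ofReal_ne_top).comp
      (ENNReal.continuous_rpow_const.comp (continuous_finsetSum _ fun j _ => ?_))
    exact ENNReal.continuous_rpow_const.comp (continuous_const.add continuous_id)
  have hlim := (hcont.tendsto 0).mono_left (nhdsWithin_le_nhds (s := Set.Ioi 0))
  simp only [add_zero] at hlim
  exact ge_of_tendsto hlim (Filter.eventually_of_mem self_mem_nhdsWithin key)
end
end

section
/- Let X be a Banach sequence space which is p-convex with constant M (1 < p < ∞) and suppose max_{0≤j<k} ‖L_k^j‖ ≤ C k^a for all k. Then ‖·‖_{X_inf} is a quasi-norm on c₀₀: for all x, y ∈ c₀₀, ‖x+y‖_{X_inf} ≤ 2^{a+1} M C (‖x‖_{X_inf} + ‖y‖_{X_inf}). -/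
/-!
Fix permutations `σ, τ` and interleave `S_σ x` and `S_τ y` into
`z = L_2^0 (S_σ x) + L_2^1 (S_τ y)`, so that
`‖z‖ ≤ C 2^a (‖S_σ x‖ + ‖S_τ y‖)`. Since `|x_n + y_n| ≤ 2 max (|x_n|, |y_n|)`, and both `x_n` and
`y_n` are entries of `z`, at places distinct for distinct `n`, the values of `x + y` on its finite
support can be permuted so that the result is dominated coordinatewise by `2 |z|`
(`exists_perm_dominated`). Hence `‖x + y‖_{X_inf} ≤ 2^{a+1} C (‖S_σ x‖ + ‖S_τ y‖)`, and one takes the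
infimum over `σ, τ`. The factor `M` costs nothing: `p`-convexity for a single vector already forces
`1 ≤ M` (`PConvex.one_le`).
-/

open scoped ENNReal BigOperators

noncomputable section

/-- Applying `p`-convexity to the single vector `e_0` gives `‖e_0‖ ≤ M ‖e_0‖`. -/
lemma PConvex.one_le {XN : (ℕ → ℝ) → ℝ≥0∞} {p M : ℝ} (hp : 1 < p)
    (hX : IsBanachSeqSpace XN) (hconv : PConvex XN p M) : 1 ≤ M := by
  obtain ⟨-, -, h0, hmono, hfin⟩ := hX
  set e : ℕ → ℝ := fun m => if m = 0 then 1 else 0 with he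
  have hp0 : p ≠ 0 := by linarith
  have h1 : XN e ≤ ENNReal.ofReal M * XN e := by
    have h := hconv 1 (fun _ => e)
    simp only [Finset.univ_unique, Finset.sum_singleton, one_div] at h
    rw [ENNReal.rpow_rpow_inv hp0] at h
    refine le_trans (hmono _ _ fun n => ?_) h
    rw [Real.rpow_rpow_inv (abs_nonneg _) hp0, abs_abs]
  have hne : XN e ≠ 0 := fun h => by
    have := congrFun (h0 e h) 0
    simp [he] at this
  have h2 : 1 * XN e ≤ ENNReal.ofReal M * XN e := by rwa [one_mul]
  rwa [ENNReal.mul_le_mul_iff_left hne (hfin 0).ne, ENNReal.one_le_ofReal] at h2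

/-- This is `k`-fold transitivity of the permutation group of `ℕ`, with `k = F.card`; it fails for
infinite `F`, where the range of `φ` may be too small. -/
lemma exists_perm_leftInv (F : Finset ℕ) (φ : ℕ → ℕ) (hφ : Function.Injective φ) :
    ∃ ρ : Equiv.Perm ℕ, ∀ n ∈ F, ρ (φ n) = n := by
  let f : Fin F.card ↪ ℕ := F.equivFin.symm.toEmbedding.trans (Function.Embedding.subtype _)
  have := Equiv.Perm.isMultiplyPretransitive ℕ F.card
  obtain ⟨ρ, hρ⟩ := MulAction.exists_smul_eq (Equiv.Perm ℕ) (f.trans ⟨φ, hφ⟩) f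
  refine ⟨ρ, fun n hn => ?_⟩
  have h := DFunLike.congr_fun hρ (F.equivFin ⟨n, hn⟩)
  simpa [f] using h

/-- Some rearrangement of `x + y` is dominated by twice the interleaving of any given
rearrangements of `x` and `y`. -/
lemma exists_perm_dominated {x y : ℕ → ℝ} (hx : FinSupp x) (hy : FinSupp y)
    (σ τ : Equiv.Perm ℕ) :
    ∃ ρ : Equiv.Perm ℕ, ∀ m, |(x + y) (ρ m)| ≤
      |((2 : ℝ) • (Lmap 2 0 (fun n => x (σ n)) + Lmap 2 1 (fun n => y (τ n)))) m| := by
  -- `φ n` is a place where the interleaving takes the larger of the values `x n`, `y n`.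
  let φ : ℕ → ℕ := fun n => if |y n| ≤ |x n| then 2 * σ.symm n else 2 * τ.symm n + 1
  have hφ : Function.Injective φ := by
    intro m n h
    simp only [φ] at h
    split_ifs at h
    · exact σ.symm.injective (by omega)
    · omega
    · omega
    · exact τ.symm.injective (by omega)
  have hfin : (Function.support x ∪ Function.support y).Finite := hx.union hy
  obtain ⟨ρ, hρ⟩ := exists_perm_leftInv hfin.toFinset φ hφ
  refine ⟨ρ, fun m => ?_⟩
  by_cases hm : ρ m ∈ hfin.toFinset
  · obtain ⟨n, rfl⟩ : ∃ n, m = φ n := ⟨ρ m, ρ.injective (hρ _ hm).symm⟩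
    have hn : ρ (φ n) = n := by
      have := hρ _ hm
      exact hφ (ρ.injective this)
    rw [hn]
    have htri := abs_add_le (x n) (y n)
    simp only [Pi.add_apply, Pi.smul_apply, smul_eq_mul, abs_mul, abs_two, Lmap, φ]
    split_ifs with h1 <;> first
      | omega
      | (have e1 : (2 * τ.symm n + 1) / 2 = τ.symm n := by omega
         simp [e1]
         linarith)
  · have hz : x (ρ m) = 0 ∧ y (ρ m) = 0 := by simpa using hm
    simp [hz.1, hz.2]

theorem statement4 (XN : (ℕ → ℝ) → ℝ≥0∞) (p M C a : ℝ)
    (hp : 1 < p) (hM : 0 < M) (hC : 0 < C)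
    (hX : IsBanachSeqSpace XN) (hconv : PConvex XN p M) (hL : LBound XN C a) :
    ∀ x y : ℕ → ℝ, FinSupp x → FinSupp y →
      XinfN XN (x + y) ≤
        ENNReal.ofReal ((2 : ℝ) ^ (a + 1) * M * C) * (XinfN XN x + XinfN XN y) := by
  intro x y hx hy
  have hM1 := hconv.one_le hp hX
  obtain ⟨hadd, hsmul, -, hmono, -⟩ := hX
  have key : ∀ σ τ : Equiv.Perm ℕ, XinfN XN (x + y) ≤ ENNReal.ofReal ((2 : ℝ) ^ (a + 1) * M * C) *
      (XN (fun n => x (σ n)) + XN (fun n => y (τ n))) := by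
    intro σ τ
    obtain ⟨ρ, hρ⟩ := exists_perm_dominated hx hy σ τ
    have h0 := hL 2 0 (by norm_num) (fun n => x (σ n))
    have h1 := hL 2 1 (by norm_num) (fun n => y (τ n))
    calc XinfN XN (x + y) ≤ XN (fun n => (x + y) (ρ n)) := iInf_le _ ρ
      _ ≤ XN ((2 : ℝ) • (Lmap 2 0 (fun n => x (σ n)) + Lmap 2 1 (fun n => y (τ n)))) :=
        hmono _ _ hρ
      _ ≤ ENNReal.ofReal |2| * (ENNReal.ofReal (C * ((2 : ℕ) : ℝ) ^ a) *
            (XN (fun n => x (σ n)) + XN (fun n => y (τ n)))) := by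
        rw [hsmul, mul_add (ENNReal.ofReal (C * ((2 : ℕ) : ℝ) ^ a))]
        gcongr
        exact (hadd _ _).trans (add_le_add h0 h1)
      _ ≤ _ := by
        rw [← mul_assoc, ← ENNReal.ofReal_mul (abs_nonneg _)]
        refine mul_le_mul_left (ENNReal.ofReal_le_ofReal ?_) _
        rw [abs_two, Nat.cast_ofNat, Real.rpow_add two_pos, Real.rpow_one]
        have hpos : 0 ≤ C * (2 : ℝ) ^ a := by positivity
        nlinarith
  have hpos : 0 < (2 : ℝ) ^ (a + 1) * M * C := by positivity
  unfold XinfN at key ⊢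
  simp only [ENNReal.iInf_add, ENNReal.add_iInf]
  rw [ENNReal.mul_iInf_of_ne (by simpa using hpos) ENNReal.ofReal_ne_top]
  refine le_iInf fun σ => ?_
  rw [ENNReal.mul_iInf_of_ne (by simpa using hpos) ENNReal.ofReal_ne_top]
  exact le_iInf fun τ => key _ _
end
end

section
/- Let X be a Banach sequence space which is p-convex (1 < p < ∞) and suppose max_{0≤j<k} ‖L_k^j‖ ≤ C k^a with a + 1/p < 1. Then for every r with a + 1/p < 1/r < 1 there is a constant C_r such that for all disjointly supported x₁,…,x_k ∈ c₀₀, ‖x₁+⋯+x_k‖_{X_inf} ≤ C_r (Σ_{j=1}^k ‖x_j‖_{X_inf}^r)^{1/r}; that is, (c₀₀, ‖·‖_{X_inf}) satisfies an upper r-estimate. -/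
/-!
The norm on `X_inf` ignores the position of the entries, so vectors `x_0, …, x_{k-1}` with disjoint
finite supports may be rearranged near-optimally one at a time and then interleaved along the
residue classes modulo `k` by the operators `L_k^j` (`XinfN_sum_le_Lmap`). This has two consequences.

* With `k = 2` and the triangle inequality in `X`, a quasi-triangle inequality with a constant `K`
  holds for disjoint vectors (`XinfN_add_lt`).
* The interleaved copies are disjoint, so `p`-convexity bounds the norm of the sum of `k` disjoint
  vectors of norm less than `l` by `M * C * k ^ b * l`, where `b = a + 1/p`
  (`XinfN_sum_fin_le`).

For the upper `r`-estimate, normalize `∑ ‖x_j‖ ^ r = 1` and fix a large base `B`. At most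
`B ^ (m + 1)` of the vectors satisfy `B ^ (-(m + 1)) < ‖x_j‖ ^ r ≤ B ^ (-m)`, and their sum has norm
`O (B ^ (-m * (1/r - b)))`. Adding these slices one after another with the quasi-triangle inequality
costs a factor `K ^ (m + 1)` on the slice of index `m`. If `B ^ (1/r - b) = 2 * K`, the resulting
series is geometric (`exists_weighted_bound`). The bound `a ≥ 0`, which follows from
`L_k^0 e_0 = e_0`, ensures `b > 0` and `r > 0`.
-/

open scoped ENNReal BigOperators

noncomputable section

/-! ### Interleaving disjoint vectors -/

lemma exists_perm_extend_s5 {f : ℕ → ℕ} (hf : Function.Injective f) {S : Set ℕ} (hS : S.Finite) :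
    ∃ τ : Equiv.Perm ℕ, ∀ n ∈ S, τ n = f n := by
  classical
  have h1 : Infinite ↥(Sᶜ) := hS.infinite_compl.to_subtype
  have h2 : Infinite ↥((f '' S)ᶜ) := (hS.image f).infinite_compl.to_subtype
  obtain ⟨e⟩ : Nonempty (↥(Sᶜ) ≃ ↥((f '' S)ᶜ)) := nonempty_equiv_of_countable
  let e₁ : ↥S ≃ ↥(f '' S) := Equiv.Set.image f S hf
  refine ⟨(Equiv.Set.sumCompl S).symm.trans
    ((Equiv.sumCongr e₁ e).trans (Equiv.Set.sumCompl (f '' S))), fun n hn => ?_⟩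
  simp [Equiv.Set.sumCompl_symm_apply_of_mem hn, e₁]

/-- The key rearrangement: copies of `x j`, rearranged by arbitrary permutations `σ j`, may be
interleaved along the residue classes modulo `k`, and the result dominates a rearrangement
of `∑ j, x j`. -/
lemma XinfN_sum_le_Lmap {XN : (ℕ → ℝ) → ℝ≥0∞} (hX : IsBanachSeqSpace XN) {k : ℕ} (hk : 0 < k)
    (x : Fin k → ℕ → ℝ) (hfin : ∀ j, FinSupp (x j)) (hd : DisjSupp x)
    (σ : Fin k → Equiv.Perm ℕ) :
    XinfN XN (∑ j, x j) ≤ XN (∑ j : Fin k, Lmap k j (fun n => x j (σ j n))) := by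
  classical
  have hg : ∀ n, ∃ i : Fin k, ∀ j, j ≠ i → x j n = 0 := by
    intro n
    by_cases h : ∃ i, x i n ≠ 0
    · obtain ⟨i, hi⟩ := h
      exact ⟨i, fun j hj => (hd j i hj n).resolve_right hi⟩
    · push Not at h
      exact ⟨⟨0, hk⟩, fun j _ => h j⟩
  choose g hg using hg
  let f : ℕ → ℕ := fun n => k * (σ (g n)).symm n + g n
  have hfm : ∀ n, f n % k = g n := fun n => by
    simp [f, Nat.mod_eq_of_lt (g n).2]
  have hfd : ∀ n, f n / k = (σ (g n)).symm n := fun n => by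
    simp [f, Nat.mul_add_div hk, Nat.div_eq_of_lt (g n).2]
  have hf : Function.Injective f := by
    intro n n' h
    have h1 : g n = g n' := Fin.ext (by rw [← hfm, ← hfm, h])
    have h2 : (σ (g n)).symm n = (σ (g n')).symm n' := by rw [← hfd, ← hfd, h]
    rw [h1] at h2
    exact (σ (g n')).symm.injective h2
  have hsum : ∀ n, (∑ j, x j) n = x (g n) n := fun n => by
    rw [Finset.sum_apply]
    exact Finset.sum_eq_single _ (fun j _ hj => hg n j hj) (by simp)
  have hS : (⋃ j, Function.support (x j)).Finite := Set.finite_iUnion hfin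
  obtain ⟨τ, hτ⟩ := exists_perm_extend_s5 hf hS
  refine (iInf_le _ τ.symm).trans (hX.2.2.2.1 _ _ fun m => ?_)
  obtain ⟨n, rfl⟩ := τ.surjective m
  rw [Equiv.symm_apply_apply, hsum]
  by_cases hn : x (g n) n = 0
  · simp [hn]
  rw [hτ n (Set.mem_iUnion.2 ⟨g n, hn⟩), Finset.sum_apply, Finset.sum_eq_single (g n)]
  · simp [Lmap, hfm, hfd]
  · intro j _ hj
    have : (g n : ℕ) ≠ j := fun h => hj (Fin.ext h.symm)
    simp [Lmap, hfm, this]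
  · simp

/-! ### Elementary facts -/

lemma XN_zero {XN : (ℕ → ℝ) → ℝ≥0∞} (hX : IsBanachSeqSpace XN) : XN 0 = 0 := by
  simpa using hX.2.1 0 0

lemma XinfN_zero {XN : (ℕ → ℝ) → ℝ≥0∞} (hX : IsBanachSeqSpace XN) : XinfN XN 0 = 0 :=
  le_antisymm ((iInf_le _ 1).trans (XN_zero hX).le) bot_le

/-- The exponent `a` cannot be negative, because `L_k^0` fixes `e_0` for every `k`. -/
lemma LBound.nonneg {XN : (ℕ → ℝ) → ℝ≥0∞} (hX : IsBanachSeqSpace XN) {C a : ℝ}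
    (hL : LBound XN C a) : 0 ≤ a := by
  by_contra! ha
  set e : ℕ → ℝ := fun m => if m = 0 then 1 else 0 with he
  have hne : XN e ≠ 0 := fun h => by
    have := congrFun (hX.2.2.1 _ h) 0
    simp [he] at this
  have hlt : XN e ≠ ⊤ := (hX.2.2.2.2 0).ne
  have key : ∀ k : ℕ, 0 < k → 1 ≤ C * (k : ℝ) ^ a := by
    intro k hk
    have hfix : Lmap k 0 e = e := by
      funext m
      by_cases hm : m = 0
      · simp [Lmap, he, hm]
      · have : m % k = 0 → m / k ≠ 0 := fun h1 h2 => hm (by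
          have := Nat.mod_add_div m k
          rw [h1, h2] at this
          simpa using this.symm)
        by_cases h1 : m % k = 0
        · simp only [Lmap, he, h1, this h1, hm, if_true, if_false]
        · simp [Lmap, he, hm, h1]
    have h := hL k 0 hk e
    rw [hfix] at h
    by_contra! hlt1
    have h2 : ENNReal.ofReal (C * (k : ℝ) ^ a) < 1 := by
      rw [← ENNReal.ofReal_one]
      exact (ENNReal.ofReal_lt_ofReal_iff one_pos).2 hlt1
    have h3 := ENNReal.mul_lt_mul_left hne hlt h2
    rw [one_mul] at h3
    exact absurd h (not_le.2 h3)
  have ht : Filter.Tendsto (fun k : ℕ => C * (k : ℝ) ^ a) Filter.atTop (nhds (C * 0)) := by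
    have := (tendsto_rpow_neg_atTop (y := -a) (by linarith)).comp
      (tendsto_natCast_atTop_atTop (R := ℝ))
    simp only [neg_neg] at this
    exact this.const_mul C
  rw [mul_zero] at ht
  have := ge_of_tendsto ht (Filter.eventually_atTop.2 ⟨1, fun k hk => key k hk⟩)
  linarith

lemma exists_perm_lt {XN : (ℕ → ℝ) → ℝ≥0∞} {x : ℕ → ℝ} {c : ℝ≥0∞} (h : XinfN XN x < c) :
    ∃ σ : Equiv.Perm ℕ, XN (fun n => x (σ n)) < c := iInf_lt_iff.1 h

/-! ### Two estimates for disjoint vectors -/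

/-- Quasi-triangle inequality for two disjoint vectors; the slack `+ 1` in the constant makes the
conclusion strict. -/
lemma XinfN_add_lt {XN : (ℕ → ℝ) → ℝ≥0∞} (hX : IsBanachSeqSpace XN) {C a : ℝ} (hC : 0 < C)
    (hL : LBound XN C a) {x y : ℕ → ℝ} (hx : FinSupp x) (hy : FinSupp y)
    (hd : ∀ n, x n = 0 ∨ y n = 0) {α β : ℝ} (hα : 0 < α) (hβ : 0 < β)
    (hxα : XinfN XN x < ENNReal.ofReal α) (hyβ : XinfN XN y < ENNReal.ofReal β) :
    XinfN XN (x + y) < ENNReal.ofReal ((C * 2 ^ a + 1) * (α + β)) := by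
  obtain ⟨σ, hσ⟩ := exists_perm_lt hxα
  obtain ⟨τ, hτ⟩ := exists_perm_lt hyβ
  have h := XinfN_sum_le_Lmap hX two_pos ![x, y]
    (by intro j; fin_cases j <;> simpa) (by
      intro i j hij n
      fin_cases i <;> fin_cases j <;> simp at hij ⊢
      · exact hd n
      · exact (hd n).symm) ![σ, τ]
  simp only [Fin.sum_univ_two, Matrix.cons_val_zero, Matrix.cons_val_one] at h
  have h0 := hL 2 0 (by norm_num) (fun n => x (σ n))
  have h1 := hL 2 1 (by norm_num) (fun n => y (τ n))
  have hK : 0 < C * (2 : ℝ) ^ a := by positivity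
  calc XinfN XN (x + y) ≤ _ := h
    _ ≤ _ := hX.1 _ _
    _ ≤ ENNReal.ofReal (C * 2 ^ a) * ENNReal.ofReal α
        + ENNReal.ofReal (C * 2 ^ a) * ENNReal.ofReal β := by
      push_cast at h0 h1
      exact add_le_add (h0.trans (by gcongr)) (h1.trans (by gcongr))
    _ = ENNReal.ofReal (C * 2 ^ a * (α + β)) := by
      rw [← mul_add, ← ENNReal.ofReal_add hα.le hβ.le, ENNReal.ofReal_mul hK.le]
    _ < _ := (ENNReal.ofReal_lt_ofReal_iff (by positivity)).2 (by nlinarith)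

/-- If `k` disjoint vectors have `X_inf`-norm below `l`, their sum has norm `O (k ^ (a + 1/p)) * l`.
Here `p`-convexity applies because the interleaved copies of the vectors are disjoint. -/
lemma XinfN_sum_fin_le {XN : (ℕ → ℝ) → ℝ≥0∞} (hX : IsBanachSeqSpace XN) {p M C a : ℝ}
    (hp : 1 < p) (hM : 0 < M) (hC : 0 < C) (hconv : PConvex XN p M)
    (hL : LBound XN C a) {k : ℕ} (hk : 0 < k) (x : Fin k → ℕ → ℝ) (hfin : ∀ j, FinSupp (x j))
    (hd : DisjSupp x) {l : ℝ} (hxl : ∀ j, XinfN XN (x j) < ENNReal.ofReal l) :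
    XinfN XN (∑ j, x j) ≤ ENNReal.ofReal (M * C * (k : ℝ) ^ (a + 1 / p) * l) := by
  have hp0 : 0 < p := by linarith
  have hkR : (0 : ℝ) < k := by exact_mod_cast hk
  choose σ hσ using fun j => exists_perm_lt (hxl j)
  let y : Fin k → ℕ → ℝ := fun j => Lmap k j (fun n => x j (σ j n))
  have hy : ∀ j, XN (y j) ≤ ENNReal.ofReal (C * (k : ℝ) ^ a * l) := fun j => by
    rw [ENNReal.ofReal_mul (by positivity)]
    exact (hL k j j.2 _).trans (by gcongr; exact (hσ j).le)
  have habs : XN (∑ j, y j) ≤ XN (fun n => (∑ j, |y j n| ^ p) ^ (1 / p)) := by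
    refine hX.2.2.2.1 _ _ fun m => ?_
    -- only the term with index `m % k` is nonzero at `m`
    have hz : ∀ j : Fin k, j ≠ ⟨m % k, Nat.mod_lt _ hk⟩ → y j m = 0 := fun j hj => by
      have : m % k ≠ j := fun h => hj (Fin.ext h.symm)
      simp [y, Lmap, this]
    rw [Finset.sum_apply, Finset.sum_eq_single _ (fun j _ hj => hz j hj) (by simp),
      Finset.sum_eq_single (⟨m % k, Nat.mod_lt _ hk⟩ : Fin k)
        (fun j _ hj => by rw [hz j hj, abs_zero, Real.zero_rpow hp0.ne']) (by simp),
      one_div, Real.rpow_rpow_inv (abs_nonneg _) hp0.ne', abs_abs]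
  refine (XinfN_sum_le_Lmap hX hk x hfin hd σ).trans (habs.trans ((hconv k y).trans ?_))
  have hs : ∑ j, XN (y j) ^ p ≤ ∑ _j : Fin k, ENNReal.ofReal (C * (k : ℝ) ^ a * l) ^ p :=
    Finset.sum_le_sum fun j _ => ENNReal.rpow_le_rpow (hy j) hp0.le
  calc _ ≤ ENNReal.ofReal M *
        (∑ _j : Fin k, ENNReal.ofReal (C * (k : ℝ) ^ a * l) ^ p) ^ (1 / p) := by gcongr
    _ = ENNReal.ofReal M * (ENNReal.ofReal ((k : ℝ) ^ (1 / p)) *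
        ENNReal.ofReal (C * (k : ℝ) ^ a * l)) := by
      rw [Finset.sum_const, Finset.card_univ, Fintype.card_fin, nsmul_eq_mul,
        ENNReal.mul_rpow_of_nonneg _ _ (by positivity), one_div, ENNReal.rpow_rpow_inv hp0.ne',
        ← ENNReal.ofReal_natCast, ENNReal.ofReal_rpow_of_pos hkR]
    _ = _ := by
      rw [← ENNReal.ofReal_mul (by positivity), ← ENNReal.ofReal_mul hM.le, Real.rpow_add hkR]
      congr 1
      ring

lemma finSupp_sum {ι : Type*} {x : ι → ℕ → ℝ} (J : Finset ι) (h : ∀ j, FinSupp (x j)) :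
    FinSupp (∑ j ∈ J, x j) := by
  refine (J.finite_toSet.biUnion fun j _ => h j).subset fun n hn => ?_
  by_contra hc
  simp only [Set.mem_iUnion, not_exists, Function.mem_support, not_not] at hc
  exact hn (by rw [Finset.sum_apply]; exact Finset.sum_eq_zero fun j hj => hc j hj)

lemma XinfN_sum_finset_lt {XN : (ℕ → ℝ) → ℝ≥0∞} (hX : IsBanachSeqSpace XN) {p M C a : ℝ}
    (hp : 1 < p) (hM : 0 < M) (hC : 0 < C) (hconv : PConvex XN p M)
    (hL : LBound XN C a) {k : ℕ} (x : Fin k → ℕ → ℝ) (hfin : ∀ j, FinSupp (x j))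
    (hd : DisjSupp x) (J : Finset (Fin k)) {l N : ℝ} (hl : 0 < l) (hN : 0 < N)
    (hJN : (J.card : ℝ) ≤ N) (hxl : ∀ j ∈ J, XinfN XN (x j) < ENNReal.ofReal l) :
    XinfN XN (∑ j ∈ J, x j) < ENNReal.ofReal ((M * C + 1) * N ^ (a + 1 / p) * l) := by
  have hb : 0 ≤ a + 1 / p := add_nonneg (hL.nonneg hX) (by positivity)
  rcases J.eq_empty_or_nonempty with rfl | hJ
  · rw [Finset.sum_empty, XinfN_zero hX, ENNReal.ofReal_pos]
    positivity
  have hs : ∑ j ∈ J, x j = ∑ i : Fin J.card, x (J.equivFin.symm i) := by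
    rw [← Finset.sum_coe_sort, ← J.equivFin.symm.sum_comp]
  rw [hs]
  refine (XinfN_sum_fin_le hX hp hM hC hconv hL hJ.card_pos
    (fun i => x (J.equivFin.symm i)) (fun i => hfin _) (fun i j hij => hd _ _ fun h =>
      hij (J.equivFin.symm.injective (Subtype.ext h)))
    (fun i => hxl _ (J.equivFin.symm i).2)).trans_lt ?_
  refine (ENNReal.ofReal_lt_ofReal_iff (by positivity)).2 ?_
  have h1 : (J.card : ℝ) ^ (a + 1 / p) ≤ N ^ (a + 1 / p) :=
    Real.rpow_le_rpow (by positivity) hJN hb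
  have h2 : M * C * (J.card : ℝ) ^ (a + 1 / p) ≤ M * C * N ^ (a + 1 / p) := by gcongr
  have h3 : 0 < N ^ (a + 1 / p) := by positivity
  exact mul_lt_mul_of_pos_right (by nlinarith) hl

/-! ### The upper estimate -/

/-- The upper `r`-estimate in a normalized form, with strictly positive weights `s j` in place of
the `r`-th powers of the norms. With `K` the quasi-triangle constant, `b = a + 1/p` and
`B ^ (1/r - b) = 2 * K`, the vectors of weight at most `B ^ (-m)` sum to a vector of norm
`O ((2 * K) ^ (-m))`. -/
lemma exists_weighted_bound {XN : (ℕ → ℝ) → ℝ≥0∞} (hX : IsBanachSeqSpace XN) {p M C a q : ℝ}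
    (hp : 1 < p) (hM : 0 < M) (hC : 0 < C) (hconv : PConvex XN p M)
    (hL : LBound XN C a) (hq : a + 1 / p < q) :
    ∃ D : ℝ, 0 < D ∧ ∀ (k : ℕ) (x : Fin k → ℕ → ℝ), (∀ j, FinSupp (x j)) → DisjSupp x →
      ∀ (s : Fin k → ℝ) (l : ℝ), 0 < l → (∀ j, 0 < s j) → ∑ j, s j ≤ 1 →
        (∀ j, XinfN XN (x j) < ENNReal.ofReal (l * s j ^ q)) →
          XinfN XN (∑ j, x j) ≤ ENNReal.ofReal (D * l) := by
  classical
  have ha : 0 ≤ a := hL.nonneg hX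
  set b := a + 1 / p with hbdef
  have hb : 0 < b := by positivity
  set K := C * 2 ^ a + 1 with hK
  have hK1 : 1 < K := by
    have : 0 < C * (2 : ℝ) ^ a := by positivity
    linarith
  have hK0 : 0 < K := by linarith
  set B : ℝ := (2 * K) ^ (1 / (q - b)) with hB
  have hB1 : 1 < B := Real.one_lt_rpow (by linarith) (by apply one_div_pos.2; linarith)
  have hB0 : 0 < B := by linarith
  have hBθ : B ^ (b - q) = (2 * K)⁻¹ := by
    rw [hB, ← Real.rpow_mul (by positivity), ← Real.rpow_neg_one]
    congr 1
    have : q - b ≠ 0 := by linarith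
    field_simp
    ring
  set E := M * C + 1 with hE
  have hE0 : 0 < E := by positivity
  refine ⟨2 * K * E * B ^ b, by positivity, fun k x hfin hd s l hl hs hs1 hx => ?_⟩
  set D := 2 * K * E * B ^ b with hD
  have hD0 : 0 < D := by positivity
  let J : ℕ → Finset (Fin k) := fun m => Finset.univ.filter fun j => s j ≤ (B⁻¹) ^ m
  have hBi0 : 0 < B⁻¹ := inv_pos.2 hB0
  have hBi1 : B⁻¹ < 1 := inv_lt_one_of_one_lt₀ hB1
  have hle1 : ∀ j, s j ≤ 1 := fun j =>
    (Finset.single_le_sum (fun i _ => (hs i).le) (Finset.mem_univ j)).trans hs1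
  -- the slice `B ^ (-(m+1)) < s j ≤ B ^ (-m)` has at most `B ^ (m+1)` elements
  have hslice : ∀ m, XinfN XN (∑ j ∈ J m \ J (m + 1), x j) <
      ENNReal.ofReal (E * B ^ b * ((2 * K)⁻¹) ^ m * l) := by
    intro m
    have hcard : ((J m \ J (m + 1)).card : ℝ) ≤ B ^ (m + 1) := by
      have h1 : (J m \ J (m + 1)).card • (B⁻¹) ^ (m + 1) ≤ ∑ j ∈ J m \ J (m + 1), s j := by
        refine Finset.card_nsmul_le_sum _ _ _ fun j hj => ?_
        simp only [J, Finset.mem_sdiff, Finset.mem_filter, Finset.mem_univ, true_and,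
          not_le] at hj
        exact hj.2.le
      have h2 : ∑ j ∈ J m \ J (m + 1), s j ≤ ∑ j, s j :=
        Finset.sum_le_sum_of_subset_of_nonneg (Finset.subset_univ _) fun i _ _ => (hs i).le
      rw [nsmul_eq_mul, inv_pow, ← div_eq_mul_inv] at h1
      have h3 := h1.trans (h2.trans hs1)
      rwa [div_le_one (by positivity)] at h3
    have h := XinfN_sum_finset_lt hX hp hM hC hconv hL x hfin hd (J m \ J (m + 1))
      (l := l * ((B⁻¹) ^ m) ^ q) (by positivity) (by positivity) hcard (fun j hj => by
        refine (hx j).trans_le (ENNReal.ofReal_le_ofReal ?_)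
        simp only [J, Finset.mem_sdiff, Finset.mem_filter, Finset.mem_univ, true_and] at hj
        have := Real.rpow_le_rpow (hs j).le hj.1 (z := q) (by linarith)
        gcongr)
    convert h using 2
    rw [← hBθ, ← hbdef]
    have e1 : (B ^ (m + 1)) ^ b = B ^ b * (B ^ b) ^ m := by
      rw [← Real.rpow_natCast_mul hB0.le, mul_comm, Real.rpow_mul_natCast hB0.le]
      ring
    have e2 : ((B⁻¹) ^ m) ^ q = ((B ^ q)⁻¹) ^ m := by
      rw [← Real.rpow_natCast_mul hBi0.le, mul_comm, Real.rpow_mul_natCast hBi0.le,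
        Real.inv_rpow hB0.le]
    rw [e1, e2, Real.rpow_sub hB0, div_eq_mul_inv, mul_pow]
    ring
  have hstep : ∀ m, XinfN XN (∑ j ∈ J (m + 1), x j) <
      ENNReal.ofReal (D * ((2 * K)⁻¹) ^ (m + 1) * l) →
      XinfN XN (∑ j ∈ J m, x j) < ENNReal.ofReal (D * ((2 * K)⁻¹) ^ m * l) := by
    intro m hm
    have hsub : J (m + 1) ⊆ J m := fun j hj => by
      simp only [J, Finset.mem_filter, Finset.mem_univ, true_and] at hj ⊢
      exact hj.trans (pow_le_pow_of_le_one hBi0.le hBi1.le (Nat.le_succ m))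
    rw [← Finset.sum_sdiff hsub]
    have h := XinfN_add_lt hX hC hL (finSupp_sum (J m \ J (m + 1)) hfin)
      (finSupp_sum (J (m + 1)) hfin) (fun n => ?_) (by positivity) (by positivity) (hslice m) hm
    · convert h using 2
      rw [hD, pow_succ]
      field_simp
      ring
    · by_contra! hc
      rw [Finset.sum_apply, Finset.sum_apply] at hc
      obtain ⟨i, hi, hi0⟩ := Finset.exists_ne_zero_of_sum_ne_zero hc.1
      obtain ⟨j, hj, hj0⟩ := Finset.exists_ne_zero_of_sum_ne_zero hc.2
      have hij : i ≠ j := fun h => (Finset.mem_sdiff.1 hi).2 (h ▸ hj)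
      rcases hd i j hij n with h | h
      · exact hi0 h
      · exact hj0 h
  -- since all weights are positive, `J m` is eventually empty
  obtain ⟨m₀, hm₀⟩ : ∃ m, J m = ∅ := by
    have ht := tendsto_pow_atTop_nhds_zero_of_lt_one hBi0.le hBi1
    have hev : ∀ᶠ m in Filter.atTop, ∀ j, (B⁻¹) ^ m < s j :=
      Filter.eventually_all.2 fun j => ht.eventually_lt_const (hs j)
    obtain ⟨m, hm⟩ := hev.exists
    exact ⟨m, Finset.filter_eq_empty_iff.2 fun j _ => not_le.2 (hm j)⟩
  have h0 : XinfN XN (∑ j ∈ J 0, x j) < ENNReal.ofReal (D * ((2 * K)⁻¹) ^ 0 * l) := by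
    refine Nat.decreasingInduction' (n := m₀) (m := 0)
      (P := fun m => XinfN XN (∑ j ∈ J m, x j) < ENNReal.ofReal (D * ((2 * K)⁻¹) ^ m * l))
      (fun m _ _ hm => hstep m hm) (Nat.zero_le _) ?_
    rw [hm₀, Finset.sum_empty, XinfN_zero hX, ENNReal.ofReal_pos]
    positivity
  have hJ0 : J 0 = Finset.univ := Finset.filter_true_of_mem fun j _ => by simpa using hle1 j
  rw [hJ0, pow_zero, mul_one] at h0
  exact h0.le

theorem statement5 (XN : (ℕ → ℝ) → ℝ≥0∞) (p M C a : ℝ)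
    (hp : 1 < p) (hM : 0 < M) (hC : 0 < C) (ha : a + 1 / p < 1)
    (hX : IsBanachSeqSpace XN) (hconv : PConvex XN p M) (hL : LBound XN C a) :
    ∀ r : ℝ, a + 1 / p < 1 / r → 1 / r < 1 →
      ∃ Cr : ℝ, 0 < Cr ∧
        ∀ (k : ℕ) (x : Fin k → ℕ → ℝ), (∀ j, FinSupp (x j)) → DisjSupp x →
          XinfN XN (∑ j, x j) ≤
            ENNReal.ofReal Cr * (∑ j, XinfN XN (x j) ^ r) ^ (1 / r) := by
  intro r hr _
  have hr0 : 0 < r := by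
    have h1 : 0 < 1 / p := by positivity
    have h2 := hL.nonneg hX
    exact one_div_pos.1 (by linarith)
  obtain ⟨D, hD, hbound⟩ := exists_weighted_bound hX hp hM hC hconv hL hr
  refine ⟨D, hD, fun k x hfin hd => ?_⟩
  rcases Nat.eq_zero_or_pos k with rfl | hk
  · simp [XinfN_zero hX]
  have hne : Nonempty (Fin k) := ⟨⟨0, hk⟩⟩
  by_cases htop : ∃ j, XinfN XN (x j) = ⊤
  · obtain ⟨j, hj⟩ := htop
    have : ∑ j, XinfN XN (x j) ^ r = ⊤ :=
      ENNReal.sum_eq_top.2 ⟨j, Finset.mem_univ _, by rw [hj, ENNReal.top_rpow_of_pos hr0]⟩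
    rw [this, ENNReal.top_rpow_of_pos (by positivity), ENNReal.mul_top (by simpa using hD)]
    exact le_top
  push Not at htop
  let v : Fin k → ℝ := fun j => (XinfN XN (x j)).toReal
  have hv : ∀ j, ENNReal.ofReal (v j) = XinfN XN (x j) := fun j => ENNReal.ofReal_toReal (htop j)
  have hv0 : ∀ j, 0 ≤ v j := fun j => ENNReal.toReal_nonneg
  let F : ℝ → ℝ := fun ε => D * (∑ j, (v j + ε) ^ r) ^ (1 / r)
  -- the norms may vanish, so they are first perturbed to `v j + ε`
  have hF : ∀ ε, 0 < ε → XinfN XN (∑ j, x j) ≤ ENNReal.ofReal (F ε) := by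
    intro ε hε
    have hu : ∀ j, 0 < v j + ε := fun j => by have := hv0 j; linarith
    set T := ∑ j, (v j + ε) ^ r with hT
    have hT0 : 0 < T := Finset.sum_pos (fun j _ => Real.rpow_pos_of_pos (hu j) r)
      Finset.univ_nonempty
    refine hbound k x hfin hd (fun j => (v j + ε) ^ r / T) (T ^ (1 / r)) (by positivity)
      (fun j => div_pos (Real.rpow_pos_of_pos (hu j) r) hT0) ?_ fun j => ?_
    · rw [← Finset.sum_div, ← hT, div_self hT0.ne']
    · have h1 : T ^ (1 / r) * ((v j + ε) ^ r / T) ^ (1 / r) = v j + ε := by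
        rw [← Real.mul_rpow hT0.le (div_pos (Real.rpow_pos_of_pos (hu j) r) hT0).le,
          mul_div_cancel₀ _ hT0.ne', one_div, Real.rpow_rpow_inv (hu j).le hr0.ne']
      rw [h1, ← hv j]
      exact (ENNReal.ofReal_lt_ofReal_iff (hu j)).2 (by linarith)
  have hFc : Continuous F := by
    refine continuous_const.mul ((continuous_finsetSum _ fun j _ => ?_).rpow_const
      fun _ => Or.inr (by positivity))
    exact (continuous_const.add continuous_id).rpow_const fun _ => Or.inr hr0.le
  have hlim : Filter.Tendsto (fun ε => ENNReal.ofReal (F ε)) (nhdsWithin 0 (Set.Ioi 0))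
      (nhds (ENNReal.ofReal (F 0))) :=
    ((ENNReal.continuous_ofReal.comp hFc).tendsto 0).mono_left nhdsWithin_le_nhds
  have h0 := ge_of_tendsto hlim (Filter.eventually_of_mem self_mem_nhdsWithin fun ε hε => hF ε hε)
  refine h0.trans_eq ?_
  have hsn : ∀ j, 0 ≤ v j ^ r := fun j => Real.rpow_nonneg (hv0 j) r
  simp only [F, add_zero]
  rw [ENNReal.ofReal_mul hD.le, ← ENNReal.ofReal_rpow_of_nonneg
    (Finset.sum_nonneg fun j _ => hsn j) (by positivity),
    ENNReal.ofReal_sum_of_nonneg fun j _ => hsn j]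
  congr 3
  funext j
  rw [← ENNReal.ofReal_rpow_of_nonneg (hv0 j) hr0.le, hv]
end
end
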